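/- Let f(z) = Σ_{n≥1} cₙ zⁿ be an injective holomorphic map on the unit disk 𝔻 with image Ω. Then the area of Ω equals π·Σ_{n≥1} n|cₙ|². -/

import Mathlib

open Complex Metric MeasureTheory

/-!
By the change of variables formula, the area of `f(𝔻)` is the integral of `|f'|²` over `𝔻`, since
the real Jacobian of a holomorphic map is `|f'|²`. In polar coordinates, orthogonality of the
exponentials `θ ↦ exp (i n θ)` turns the integral of `|∑ aₙ zⁿ|²` over the circle of radius `r` into
`2π ∑ |aₙ|² r²ⁿ`, and integrating `r²ⁿ⁺¹` in `r` then gives `π ∑ |aₙ|² R²ⁿ⁺² / (n + 1)` for a disk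
of radius `R`. For `f'` one has `aₙ = (n + 1) cₙ₊₁`. All integrals and sums are taken in `[0, ∞]`,
so that images of infinite area need no separate treatment.
-/

open Set FormalMultilinearSeries

open scoped ENNReal NNReal Real

section Orthonormal

variable {𝕜 E ι : Type*} [RCLike 𝕜] [NormedAddCommGroup E] [InnerProductSpace 𝕜 E] {v : ι → E}

lemma enorm_sum_smul_sq_of_orthonormal (hv : Orthonormal 𝕜 v) (a : ι → 𝕜) (s : Finset ι) :
    ‖∑ i ∈ s, a i • v i‖ₑ ^ 2 = ∑ i ∈ s, ‖a i‖ₑ ^ 2 := by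
  have hnorm : ‖∑ i ∈ s, a i • v i‖ ^ 2 = ∑ i ∈ s, ‖a i‖ ^ 2 := by
    simpa using hv.orthogonalFamily.norm_sum a s
  simp only [← ofReal_norm, ← ENNReal.ofReal_pow (norm_nonneg _), hnorm]
  exact ENNReal.ofReal_sum_of_nonneg fun i _ ↦ by positivity

lemma tsum_enorm_sq_of_orthonormal (hv : Orthonormal 𝕜 v) {a : ι → 𝕜} {x : E}
    (hx : HasSum (fun i ↦ a i • v i) x) : ∑' i, ‖a i‖ₑ ^ 2 = ‖x‖ₑ ^ 2 := by
  have hlim := ((ENNReal.continuous_pow 2).comp continuous_enorm).continuousAt.tendsto.comp hx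
  refine HasSum.tsum_eq ?_
  simpa only [HasSum, Function.comp_def, enorm_sum_smul_sq_of_orthonormal hv] using! hlim

end Orthonormal

section Parseval

lemma lintegral_enorm_sq_of_hasSum_fourier {T : ℝ} [Fact (0 < T)] {ι : Type*}
    {g : C(AddCircle T, ℂ)} {a : ι → ℂ} {k : ι → ℤ} (hk : k.Injective)
    (hg : HasSum (fun i ↦ a i • fourier (k i)) g) :
    ∫⁻ x, ‖g x‖ₑ ^ 2 ∂AddCircle.haarAddCircle = ∑' i, ‖a i‖ₑ ^ 2 := by
  have hL2 := (ContinuousMap.toLp (E := ℂ) 2 (AddCircle.haarAddCircle (T := T)) ℂ).hasSum hg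
  simp only [map_smul] at hL2
  rw [tsum_enorm_sq_of_orthonormal (orthonormal_fourier.comp k hk) hL2, Lp.enorm_def,
    eLpNorm_congr_ae (ContinuousMap.coeFn_toLp _ g)]
  simpa using (eLpNorm_nnreal_pow_eq_lintegral (f := g) (p := 2) two_ne_zero).symm

lemma apply_mul_exp_eq_smul_fourier (p : FormalMultilinearSeries ℂ ℂ ℂ) (n : ℕ) (r θ : ℝ) :
    (p n fun _ ↦ r * cexp (θ * I)) =
      (p.coeff n * (r : ℂ) ^ n) • fourier n (θ : AddCircle (2 * π)) := by
  have hfourier : fourier n (θ : AddCircle (2 * π)) = cexp (θ * I) ^ n := by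
    rw [fourier_coe_apply, ← exp_nat_mul]
    congr 1
    push_cast
    field_simp
  rw [hfourier, apply_eq_pow_smul_coeff, smul_eq_mul, smul_eq_mul]
  ring

lemma lintegral_circleMap_enorm_sq {g : ℂ → ℂ} {p : FormalMultilinearSeries ℂ ℂ ℂ} {z₀ : ℂ}
    {R : ℝ≥0∞} (hg : HasFPowerSeriesOnBall g p z₀ R) {r : ℝ≥0} (hr : r < R) :
    ∫⁻ θ in Ioc (-π) π, ‖g (circleMap z₀ r θ)‖ₑ ^ 2 =
      ENNReal.ofReal (2 * π) * ∑' n, ‖p.coeff n‖ₑ ^ 2 * (r : ℝ≥0∞) ^ (2 * n) := by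
  have hT : Fact (0 < 2 * π) := ⟨Real.two_pi_pos⟩
  set a : ℕ → ℂ := fun n ↦ p.coeff n * (r : ℂ) ^ n
  have hsum : Summable fun n ↦ a n • (fourier n : C(AddCircle (2 * π), ℂ)) := by
    refine .of_norm ?_
    simpa [a, norm_smul, fourier_norm] using p.summable_norm_mul_pow (hr.trans_le hg.r_le)
  set G : C(AddCircle (2 * π), ℂ) := ∑' n, a n • fourier n
  have hG (θ : ℝ) : G θ = g (circleMap z₀ r θ) := by
    have hmem : r * cexp (θ * I) ∈ eball (0 : ℂ) R := by simpa [enorm_eq_nnnorm]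
    have hvalue : HasSum (fun n : ℕ ↦ a n • fourier n (θ : AddCircle (2 * π)))
        (g (circleMap z₀ r θ)) := by
      simpa only [apply_mul_exp_eq_smul_fourier] using! hg.hasSum hmem
    exact (ContinuousMap.hasSum_apply hsum.hasSum θ).unique hvalue
  calc
    _ = ∫⁻ x, ‖G x‖ₑ ^ 2 := by
      simp_rw [← hG, ← AddCircle.lintegral_preimage (2 * π) (-π)]
      ring_nf
    _ = ENNReal.ofReal (2 * π) * ∑' n, ‖a n‖ₑ ^ 2 := by
      rw [AddCircle.volume_eq_smul_haarAddCircle, lintegral_smul_measure, smul_eq_mul,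
        lintegral_enorm_sq_of_hasSum_fourier Nat.cast_injective hsum.hasSum]
    _ = _ := by simp [a, mul_pow, ← pow_mul, mul_comm 2, enorm_eq_nnnorm]

end Parseval

section PolarCoordinates

lemma lintegral_eq_lintegral_circleMap {F : ℂ → ℝ≥0∞} (hF : Measurable F) (z₀ : ℂ) :
    ∫⁻ z, F z = ∫⁻ r in Ioi (0 : ℝ), ENNReal.ofReal r *
      ∫⁻ θ in Ioc (-π) π, F (circleMap z₀ r θ) := by
  have hpolar (r θ : ℝ) : z₀ + Complex.polarCoord.symm (r, θ) = circleMap z₀ r θ := by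
    simp [circleMap, exp_mul_I]
  have hmeas : Measurable fun x : ℝ × ℝ ↦ circleMap z₀ x.1 x.2 := by
    unfold circleMap
    fun_prop
  rw [← lintegral_add_left_eq_self F z₀, ← Complex.lintegral_comp_polarCoord_symm,
    polarCoord_target, Measure.volume_eq_prod, setLIntegral_prod]
  · simp only [hpolar, smul_eq_mul, lintegral_const_mul' _ _ ENNReal.ofReal_ne_top,
      setLIntegral_congr Ioo_ae_eq_Ioc]
  · simp only [hpolar]
    fun_prop

lemma lintegral_ball_eq_lintegral_circleMap {F : ℂ → ℝ≥0∞} {z₀ : ℂ} {R : ℝ}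
    (hF : Measurable ((ball z₀ R).indicator F)) :
    ∫⁻ z in ball z₀ R, F z = ∫⁻ r in Ioo 0 R, ENNReal.ofReal r *
      ∫⁻ θ in Ioc (-π) π, F (circleMap z₀ r θ) := by
  rw [← lintegral_indicator measurableSet_ball, lintegral_eq_lintegral_circleMap hF z₀,
    ← Ioi_inter_Iio, inter_comm, ← setLIntegral_indicator measurableSet_Iio]
  refine setLIntegral_congr_fun measurableSet_Ioi fun r (hr : 0 < r) ↦ ?_
  by_cases hrR : r < R <;> simp [indicator, circleMap, abs_of_pos hr, hrR]

lemma lintegral_Ioo_zero_pow (R : ℝ≥0) (n : ℕ) :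
    ∫⁻ r in Ioo 0 (R : ℝ), ENNReal.ofReal r ^ n = (R : ℝ≥0∞) ^ (n + 1) / (n + 1) := by
  have hint : IntegrableOn (fun r : ℝ ↦ r ^ n) (Ioo 0 R) :=
    (continuous_pow n).integrableOn_Icc.mono_set Ioo_subset_Icc_self
  calc
    _ = ∫⁻ r in Ioo 0 (R : ℝ), ENNReal.ofReal (r ^ n) :=
      setLIntegral_congr_fun measurableSet_Ioo fun r hr ↦ (ENNReal.ofReal_pow hr.1.le n).symm
    _ = ENNReal.ofReal (∫ r in (0 : ℝ)..R, r ^ n) := by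
      rw [intervalIntegral.integral_of_le R.coe_nonneg, integral_Ioc_eq_integral_Ioo,
        ofReal_integral_eq_lintegral_ofReal hint]
      filter_upwards [ae_restrict_mem measurableSet_Ioo] with r hr using pow_nonneg hr.1.le n
    _ = _ := by
      rw [integral_pow, zero_pow n.succ_ne_zero, sub_zero,
        ENNReal.ofReal_div_of_pos (by positivity), ENNReal.ofReal_pow R.coe_nonneg,
        ENNReal.ofReal_coe_nnreal, ← Nat.cast_succ, ENNReal.ofReal_natCast, Nat.cast_succ]

lemma two_mul_lintegral_Ioo_zero_pow_two_mul_add_one (R : ℝ≥0) (n : ℕ) :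
    2 * ∫⁻ r in Ioo 0 (R : ℝ), ENNReal.ofReal r ^ (2 * n + 1) =
      (R : ℝ≥0∞) ^ (2 * (n + 1)) / (n + 1) := by
  have hden : ((2 * n + 1 : ℕ) : ℝ≥0∞) + 1 = 2 * (n + 1) := by
    push_cast
    ring
  rw [lintegral_Ioo_zero_pow, hden, ← mul_div_assoc,
    ENNReal.mul_div_mul_left _ _ two_ne_zero ENNReal.ofNat_ne_top, mul_add_one]

end PolarCoordinates

lemma lintegral_ball_enorm_sq {g : ℂ → ℂ} {p : FormalMultilinearSeries ℂ ℂ ℂ} {z₀ : ℂ} {R : ℝ≥0}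
    (hg : HasFPowerSeriesOnBall g p z₀ R) :
    ∫⁻ z in ball z₀ R, ‖g z‖ₑ ^ 2 = ENNReal.ofReal π *
      ∑' n : ℕ, ‖p.coeff n‖ₑ ^ 2 * ((R : ℝ≥0∞) ^ (2 * (n + 1)) / (n + 1)) := by
  have hcont : ContinuousOn (fun z ↦ ‖g z‖ₑ ^ 2) (ball z₀ R) := by
    have := hg.continuousOn
    rw [eball_coe] at this
    fun_prop
  have hmeas : Measurable ((ball z₀ R).indicator fun z ↦ ‖g z‖ₑ ^ 2) := by
    classical
    rw [← piecewise_eq_indicator]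
    exact hcont.measurable_piecewise continuousOn_const measurableSet_ball
  calc
    _ = ∫⁻ r in Ioo 0 (R : ℝ), ENNReal.ofReal r *
          (ENNReal.ofReal (2 * π) * ∑' n, ‖p.coeff n‖ₑ ^ 2 * ENNReal.ofReal r ^ (2 * n)) := by
      rw [lintegral_ball_eq_lintegral_circleMap hmeas]
      refine setLIntegral_congr_fun measurableSet_Ioo fun r hr ↦ ?_
      lift r to ℝ≥0 using hr.1.le
      simp only [ENNReal.ofReal_coe_nnreal]
      rw [lintegral_circleMap_enorm_sq hg (by exact_mod_cast hr.2)]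
    _ = ∑' n, ENNReal.ofReal (2 * π) * ‖p.coeff n‖ₑ ^ 2 *
          ∫⁻ r in Ioo 0 (R : ℝ), ENNReal.ofReal r ^ (2 * n + 1) := by
      simp_rw [← ENNReal.tsum_mul_left]
      rw [lintegral_tsum fun n ↦ by fun_prop]
      congr with n
      rw [← lintegral_const_mul _ (by fun_prop)]
      congr with r
      ring
    _ = _ := by
      rw [← ENNReal.tsum_mul_left]
      congr with n
      rw [← two_mul_lintegral_Ioo_zero_pow_two_mul_add_one, ENNReal.ofReal_mul zero_le_two,
        ENNReal.ofReal_ofNat]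
      ring

section PowerSeries

lemma hasFPowerSeriesOnBall_ofScalars_of_hasSum {𝕜 : Type*} [RCLike 𝕜] {f : 𝕜 → 𝕜} {c : ℕ → 𝕜}
    {x : 𝕜} {R : ℝ≥0} (hR : 0 < R)
    (hf : ∀ y ∈ ball (0 : 𝕜) R, HasSum (fun n ↦ c n * y ^ n) (f (x + y))) :
    HasFPowerSeriesOnBall f (ofScalars 𝕜 c) x R where
  r_le := by
    refine ENNReal.le_of_forall_nnreal_lt fun s hs ↦ ?_
    have hs_mem : ((s : ℝ) : 𝕜) ∈ ball (0 : 𝕜) R := by simpa using hs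
    refine le_radius_of_tendsto (l := 0) _ ?_
    simpa using (hf _ hs_mem).summable.tendsto_atTop_zero.norm
  r_pos := by exact_mod_cast hR
  hasSum {y} hy := by
    rw [eball_coe] at hy
    simpa [mul_comm] using hf y hy

variable {𝕜 F : Type*} [NontriviallyNormedField 𝕜] [NormedAddCommGroup F] [NormedSpace 𝕜 F]

/-- The formal derivative of a power series `p` in one variable, as a power series with values in
the same space; `p.derivSeries` has values in the continuous linear maps `𝕜 →L[𝕜] F` instead. -/
noncomputable def scalarDerivSeries (p : FormalMultilinearSeries 𝕜 𝕜 F) :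
    FormalMultilinearSeries 𝕜 𝕜 F :=
  (ContinuousLinearMap.apply 𝕜 F (1 : 𝕜)).compFormalMultilinearSeries p.derivSeries

lemma coeff_scalarDerivSeries (p : FormalMultilinearSeries 𝕜 𝕜 F) (n : ℕ) :
    (scalarDerivSeries p).coeff n = (n + 1) • p.coeff (n + 1) :=
  p.derivSeries_coeff_one n

lemma hasFPowerSeriesOnBall_deriv [CompleteSpace F] {f : 𝕜 → F}
    {p : FormalMultilinearSeries 𝕜 𝕜 F} {x : 𝕜} {r : ℝ≥0∞} (hf : HasFPowerSeriesOnBall f p x r) :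
    HasFPowerSeriesOnBall (deriv f) (scalarDerivSeries p) x r :=
  (ContinuousLinearMap.apply 𝕜 F (1 : 𝕜)).comp_hasFPowerSeriesOnBall hf.fderiv

end PowerSeries

section Area

lemma det_restrictScalars_toSpanSingleton (w : ℂ) :
    ((ContinuousLinearMap.toSpanSingleton ℂ w).restrictScalars ℝ).det = ‖w‖ ^ 2 := by
  simp [ContinuousLinearMap.det, LinearMap.det_restrictScalars, Algebra.norm_complex_eq,
    normSq_eq_norm_sq]

lemma volume_image_eq_lintegral_enorm_deriv_sq {f f' : ℂ → ℂ} {s : Set ℂ} (hs : MeasurableSet s)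
    (hf : ∀ z ∈ s, HasDerivWithinAt f (f' z) s z) (hinj : InjOn f s) :
    volume (f '' s) = ∫⁻ z in s, ‖f' z‖ₑ ^ 2 := by
  rw [← lintegral_abs_det_fderiv_eq_addHaar_image volume hs
    (fun z hz ↦ (hf z hz).hasFDerivWithinAt.restrictScalars ℝ) hinj]
  simp only [det_restrictScalars_toSpanSingleton, abs_pow, abs_norm, ENNReal.ofReal_pow,
    norm_nonneg, ofReal_norm]

lemma lintegral_ball_enorm_deriv_sq {f : ℂ → ℂ} {p : FormalMultilinearSeries ℂ ℂ ℂ} {z₀ : ℂ}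
    {R : ℝ≥0} (hf : HasFPowerSeriesOnBall f p z₀ R) :
    ∫⁻ z in ball z₀ R, ‖deriv f z‖ₑ ^ 2 =
      ENNReal.ofReal π * ∑' n : ℕ, n * ‖p.coeff n‖ₑ ^ 2 * (R : ℝ≥0∞) ^ (2 * n) := by
  rw [lintegral_ball_enorm_sq (hasFPowerSeriesOnBall_deriv hf),
    tsum_eq_zero_add' (f := fun n : ℕ ↦ n * ‖p.coeff n‖ₑ ^ 2 * (R : ℝ≥0∞) ^ (2 * n))
      ENNReal.summable, Nat.cast_zero, zero_mul, zero_mul, zero_add]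
  congr 2 with n
  have hcoeff : ‖(scalarDerivSeries p).coeff n‖ₑ = ((n + 1 : ℕ) : ℝ≥0∞) * ‖p.coeff (n + 1)‖ₑ := by
    rw [coeff_scalarDerivSeries, nsmul_eq_mul, enorm_mul, enorm_eq_nnnorm (_ : ℂ),
      nnnorm_natCast, ENNReal.coe_natCast]
  have hcancel : ((n + 1 : ℕ) : ℝ≥0∞) * (R ^ (2 * (n + 1)) / (n + 1 : ℕ)) = R ^ (2 * (n + 1)) :=
    ENNReal.mul_div_cancel (by positivity) (ENNReal.natCast_ne_top _)
  calc
    _ = (n + 1 : ℕ) * ‖p.coeff (n + 1)‖ₑ ^ 2 *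
          ((n + 1 : ℕ) * ((R : ℝ≥0∞) ^ (2 * (n + 1)) / (n + 1 : ℕ))) := by
      rw [hcoeff, ← Nat.cast_succ]
      ring
    _ = _ := by rw [hcancel]

theorem area_formula_general {f : ℂ → ℂ} {p : FormalMultilinearSeries ℂ ℂ ℂ} {z₀ : ℂ} {R : ℝ≥0}
    (hf : HasFPowerSeriesOnBall f p z₀ R) (hinj : InjOn f (ball z₀ R)) :
    volume (f '' ball z₀ R) =
      ENNReal.ofReal π * ∑' n : ℕ, n * ‖p.coeff n‖ₑ ^ 2 * (R : ℝ≥0∞) ^ (2 * n) := by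
  have hderiv : ∀ z ∈ ball z₀ R, HasDerivWithinAt f (deriv f z) (ball z₀ R) z := fun z hz ↦
    (hf.analyticAt_of_mem (by rwa [eball_coe])).differentiableAt.hasDerivAt.hasDerivWithinAt
  rw [volume_image_eq_lintegral_enorm_deriv_sq measurableSet_ball hderiv hinj,
    lintegral_ball_enorm_deriv_sq hf]

end Area

theorem area_formula (f : ℂ → ℂ) (c : ℕ → ℂ)
    (hf : DifferentiableOn ℂ f (ball 0 1))
    (hinj : Set.InjOn f (ball 0 1))
    (hc0 : c 0 = 0)
    (hsum : ∀ z ∈ ball (0:ℂ) 1, HasSum (fun n : ℕ => c n * z ^ n) (f z)) :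
    (volume (f '' ball (0:ℂ) 1)).toReal
      = Real.pi * ∑' n : ℕ, (n : ℝ) * ‖c n‖ ^ 2 := by
  have hseries : HasFPowerSeriesOnBall f (.ofScalars ℂ c) 0 (1 : ℝ≥0) :=
    hasFPowerSeriesOnBall_ofScalars_of_hasSum one_pos (by simpa using hsum)
  rw [← NNReal.coe_one, area_formula_general hseries (by simpa using hinj)]
  simp [ENNReal.tsum_toReal_eq, ENNReal.mul_ne_top, Real.pi_nonneg]
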